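/- arXiv:1504.02414 — 2 statements merged into one kernel-verified Lean document; each statement's English description precedes it below -/
import Mathlib

section
/- If G is a 2-connected simple graph, then pc(G) ≤ 3, and moreover there exists a proper-path 3-coloring of G having the strong property. -/
open SimpleGraph

/-- An edge-coloring `c` with `k` colors is a proper-path coloring of `G` if every pair of
distinct vertices is joined by a path on which no two consecutive edges share a color. -/
def IsProperPathColoring {V : Type*} (G : SimpleGraph V) {k : ℕ}
    (c : Sym2 V → Fin k) : Prop :=
  ∀ u v : V, u ≠ v → ∃ p : G.Walk u v, p.IsPath ∧ (p.edges.map c).Chain' (· ≠ ·)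

/-- The proper connection number of `G`: the least number of colors in a
proper-path coloring of `G`. -/
noncomputable def pc {V : Type*} (G : SimpleGraph V) : ℕ :=
  sInf {k : ℕ | ∃ c : Sym2 V → Fin k, IsProperPathColoring G c}

/-- The strong property: any two distinct vertices are joined by two proper paths whose
first edge colors differ and whose last edge colors differ. -/
def HasStrongProperty {V : Type*} (G : SimpleGraph V) {k : ℕ}
    (c : Sym2 V → Fin k) : Prop :=
  ∀ u v : V, u ≠ v → ∃ p q : G.Walk u v,
    p.IsPath ∧ (p.edges.map c).Chain' (· ≠ ·) ∧
    q.IsPath ∧ (q.edges.map c).Chain' (· ≠ ·) ∧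
    (p.edges.map c).head? ≠ (q.edges.map c).head? ∧
    (p.edges.map c).getLast? ≠ (q.edges.map c).getLast?

/-- A graph is 2-connected if it has at least 3 vertices and removing any single
vertex leaves it connected. -/
def TwoConnected {V : Type*} (G : SimpleGraph V) : Prop :=
  3 ≤ Nat.card V ∧ ∀ v : V, (G.induce ({v}ᶜ : Set V)).Connected

/-!
Call a set of vertices flexibly connected if any two of its vertices are joined inside it by a
proper path whose first color avoids any one prescribed color. A cycle whose consecutive edges have
different colors is flexibly connected, as its two arcs between a pair of vertices start with
different colors, and so is the union of two flexibly connected sets with a common vertex: follow a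
path in the first set up to its first vertex in the second, and continue there avoiding the last
color.

Given a flexibly connected set `S` in a 2-edge-connected graph, an ear leaving `S` closes up to a
cycle along a proper path inside `S`. The ear, which may be attached to `S` at a single vertex, has
at least two edges, so three colors suffice to color it such that this cycle becomes proper all the
way round; hence `S` together with the ear is flexibly connected. A maximal flexibly connected set
is therefore the whole vertex set, and flexibility at both ends of a pair of vertices gives the
strong property.
-/

section

variable {V C : Type*} {G : SimpleGraph V} {c c' : Sym2 V → C} {S T : Set V} {u v w x y : V}

theorem isPath_append {p : G.Walk u v} {q : G.Walk v w} (hp : p.IsPath) (hq : q.IsPath)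
    (hpq : ∀ z ∈ p.support, z ∈ q.support → z = v) : (p.append q).IsPath := by
  have hq' : (v :: q.support.tail).Nodup := q.cons_tail_support.symm ▸ hq.support_nodup
  rw [Walk.isPath_def, Walk.support_append, List.nodup_append']
  refine ⟨hp.support_nodup, hq'.of_cons, fun z hzp hzq ↦ ?_⟩
  have hzv : z = v := hpq z hzp (List.mem_of_mem_tail hzq)
  exact hq'.notMem (hzv ▸ hzq)

theorem map_edges_eq_of_eqOn {p : G.Walk u v} (hp : ∀ z ∈ p.support, z ∈ S)
    (hc : Set.EqOn c' c S.sym2) : p.edges.map c' = p.edges.map c :=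
  List.map_congr_left fun _ he ↦ hc <|
    Set.mem_sym2_iff_subset.mpr fun z hz ↦ hp z (p.mem_support_of_mem_edges he hz)

/-- A path in an edge-colored graph whose consecutive edges have different colors. -/
structure IsProperPath (c : Sym2 V → C) (p : G.Walk u v) : Prop where
  isPath : p.IsPath
  isChain : (p.edges.map c).IsChain (· ≠ ·)

namespace IsProperPath

theorem nil (c : Sym2 V → C) (u : V) : IsProperPath c (Walk.nil : G.Walk u u) :=
  ⟨.nil, .nil⟩

variable {p : G.Walk u v} {q : G.Walk v w}

theorem reverse (hp : IsProperPath c p) : IsProperPath c p.reverse where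
  isPath := hp.isPath.reverse
  isChain := by
    rw [Walk.edges_reverse, List.map_reverse, List.isChain_reverse]
    exact hp.isChain.imp fun _ _ h ↦ h.symm

theorem append (hp : IsProperPath c p) (hq : IsProperPath c q)
    (hpq : ∀ z ∈ p.support, z ∈ q.support → z = v)
    (hc : ∀ a ∈ (p.edges.map c).getLast?, a ∉ (q.edges.map c).head?) :
    IsProperPath c (p.append q) where
  isPath := isPath_append hp.isPath hq.isPath hpq
  isChain := by
    rw [Walk.edges_append, List.map_append]
    exact hp.isChain.append hq.isChain fun a ha b hb hab ↦ hc a ha (hab ▸ hb)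

theorem takeUntil [DecidableEq V] (hp : IsProperPath c p) (hx : x ∈ p.support) :
    IsProperPath c (p.takeUntil x hx) where
  isPath := hp.isPath.takeUntil hx
  isChain := hp.isChain.prefix ((p.edges_takeUntil_prefix_edges hx).map c)

end IsProperPath

theorem exists_mem_forall_support_takeUntil_imp_eq [DecidableEq V] (p : G.Walk u v)
    (hS : ∃ z ∈ p.support, z ∈ S) :
    ∃ (w : V) (hw : w ∈ p.support), w ∈ S ∧ ∀ z ∈ (p.takeUntil w hw).support, z ∈ S → z = w := by
  classical
  obtain ⟨z, hzp, hzS⟩ := hS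
  obtain ⟨w, hwS, hwp, hw⟩ := p.exists_mem_support_forall_mem_support_imp_eq
    {z ∈ p.support.toFinset | z ∈ S} ⟨z, by simp [hzp, hzS]⟩
  simp only [Finset.mem_filter, List.mem_toFinset] at hwS hw
  exact ⟨w, hwp, hwS.2, fun z hz hzS ↦
    hw z ⟨p.support_takeUntil_subset_support hwp hz, hzS⟩ hz⟩

/-- `S` is flexibly connected if any two of its vertices are joined inside `S`, in either direction,
by a proper path whose first color is not a prescribed one. The trivial path has no first color, so
nothing is required of a vertex and itself. -/
def FlexiblyConnected (G : SimpleGraph V) (c : Sym2 V → C) (S : Set V) : Prop :=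
  ∀ x ∈ S, ∀ y ∈ S, ∀ a : C, ∃ p : G.Walk x y,
    IsProperPath c p ∧ (∀ z ∈ p.support, z ∈ S) ∧ a ∉ (p.edges.map c).head?

namespace FlexiblyConnected

theorem singleton (G : SimpleGraph V) (c : Sym2 V → C) (x : V) : FlexiblyConnected G c {x} := by
  rintro _ rfl _ rfl a
  exact ⟨.nil, .nil c _, by simp, by simp⟩

theorem exists_append (hT : FlexiblyConnected G c T) {p : G.Walk x w} (hp : IsProperPath c p)
    (hpT : ∀ z ∈ p.support, z ∈ T → z = w) (hw : w ∈ T) (hy : y ∈ T) {a : C}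
    (ha : a ∉ (p.edges.map c).head?) :
    ∃ q : G.Walk w y, IsProperPath c (p.append q) ∧ (∀ z ∈ q.support, z ∈ T) ∧
      a ∉ ((p.append q).edges.map c).head? := by
  -- If `p` is trivial it has no last color, and `q` itself has to avoid `a`.
  obtain ⟨q, hq, hqT, hqa⟩ := hT w hw y hy (((p.edges.map c).getLast?).getD a)
  refine ⟨q, hp.append hq (fun z hzp hzq ↦ hpT z hzp (hqT z hzq)) fun b hb ↦ ?_, hqT, ?_⟩
  · rwa [Option.mem_def.mp hb] at hqa
  · rw [Walk.edges_append, List.map_append, List.head?_append]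
    cases p with
    | nil => simpa using hqa
    | cons h p => simpa using ha

theorem exists_isProperPath_of_inter (hS : FlexiblyConnected G c S) (hT : FlexiblyConnected G c T)
    (hST : (S ∩ T).Nonempty) (hx : x ∈ S) (hy : y ∈ T) (a : C) :
    ∃ p : G.Walk x y, IsProperPath c p ∧ (∀ z ∈ p.support, z ∈ S ∪ T) ∧
      a ∉ (p.edges.map c).head? := by
  classical
  obtain ⟨u, huS, huT⟩ := hST
  obtain ⟨p, hp, hpS, hpa⟩ := hS x hx u huS a
  obtain ⟨w, hwp, hwT, hw⟩ :=
    exists_mem_forall_support_takeUntil_imp_eq p ⟨u, p.end_mem_support, huT⟩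
  have hwa : a ∉ ((p.takeUntil w hwp).edges.map c).head? := fun h ↦ by
    obtain ⟨l, hl⟩ := (p.edges_takeUntil_prefix_edges hwp).map c
    exact hpa (hl ▸ List.mem_head?_append_of_mem_head? h)
  obtain ⟨q, hpq, hqT, hpqa⟩ := hT.exists_append (hp.takeUntil hwp) hw hwT hy hwa
  refine ⟨_, hpq, fun z hz ↦ ?_, hpqa⟩
  rw [Walk.mem_support_append_iff] at hz
  exact hz.imp (fun hz ↦ hpS z (p.support_takeUntil_subset_support hwp hz)) (hqT z)

theorem union (hS : FlexiblyConnected G c S) (hT : FlexiblyConnected G c T)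
    (hST : (S ∩ T).Nonempty) : FlexiblyConnected G c (S ∪ T) := by
  rintro x (hx | hx) y (hy | hy) a
  · obtain ⟨p, hp, hpS, hpa⟩ := hS x hx y hy a
    exact ⟨p, hp, fun z hz ↦ .inl (hpS z hz), hpa⟩
  · exact hS.exists_isProperPath_of_inter hT hST hx hy a
  · rw [Set.union_comm]
    exact hT.exists_isProperPath_of_inter hS (Set.inter_comm S T ▸ hST) hx hy a
  · obtain ⟨p, hp, hpT, hpa⟩ := hT x hx y hy a
    exact ⟨p, hp, fun z hz ↦ .inr (hpT z hz), hpa⟩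

theorem congr (hS : FlexiblyConnected G c S) (hc : Set.EqOn c' c S.sym2) :
    FlexiblyConnected G c' S := by
  intro x hx y hy a
  obtain ⟨p, hp, hpS, hpa⟩ := hS x hx y hy a
  have hcp := map_edges_eq_of_eqOn hpS hc
  exact ⟨p, ⟨hp.isPath, hcp ▸ hp.isChain⟩, hpS, hcp ▸ hpa⟩

end FlexiblyConnected

theorem isChain_of_cycle_chain {r : C → C → Prop} {l : List C} (h : Cycle.Chain r l) :
    l.IsChain r := by
  cases l with
  | nil => exact .nil
  | cons a l => exact ((Cycle.chain_coe_cons r a l).mp h).left_of_append (l₁ := a :: l)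

theorem rel_getLast?_head?_of_cycle_chain {r : C → C → Prop} {l : List C} {a b : C}
    (h : Cycle.Chain r l) (ha : a ∈ l.head?) (hb : b ∈ l.getLast?) : r b a := by
  obtain ⟨hl, rfl⟩ := List.mem_getLast?_eq_getLast hb
  exact ((Cycle.chain_ne_nil r hl).mp h).rel_head? ha

theorem IsProperPath.of_isCycle_append {p : G.Walk x y} {q : G.Walk y x} (hxy : x ≠ y)
    (h : (p.append q).IsCycle)
    (hc : Cycle.Chain (· ≠ ·) (p.edges.map c ++ q.edges.map c : Cycle C)) :
    IsProperPath c p ∧ IsProperPath c q := by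
  have hchain := isChain_of_cycle_chain hc
  exact ⟨⟨h.isPath_of_append_left (Walk.not_nil_of_ne hxy.symm), hchain.left_of_append⟩,
    ⟨h.isPath_of_append_right (Walk.not_nil_of_ne hxy), hchain.right_of_append⟩⟩

namespace FlexiblyConnected

theorem of_isCycle {p : G.Walk u u} (hp : p.IsCycle)
    (hc : Cycle.Chain (· ≠ ·) (p.edges.map c : Cycle C)) :
    FlexiblyConnected G c {z | z ∈ p.support} := by
  classical
  rintro x (hx : x ∈ p.support) y (hy : y ∈ p.support) a
  obtain rfl | hxy := eq_or_ne x y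
  · exact ⟨.nil, .nil c _, by simpa using hx, by simp⟩
  have hy' : y ∈ (p.rotate x hx).support := (p.mem_support_rotate_iff x hx).mpr hy
  set q := (p.rotate x hx).takeUntil y hy'
  set r := (p.rotate x hx).dropUntil y hy'
  have hqr : q.append r = p.rotate x hx := Walk.take_spec _ hy'
  have hcycle : (q.append r).IsCycle := hqr ▸ hp.rotate hx
  have hsupp (z) (hz : z ∈ (q.append r).support) : z ∈ p.support :=
    (p.mem_support_rotate_iff x hx).mp (hqr ▸ hz)
  have hchain : Cycle.Chain (· ≠ ·) (q.edges.map c ++ r.edges.map c : Cycle C) := by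
    rw [← List.map_append, ← Walk.edges_append, hqr]
    rwa [Cycle.coe_eq_coe.mpr ((p.rotate_edges x hx).map c)]
  obtain ⟨hq, hr⟩ := IsProperPath.of_isCycle_append hxy hcycle hchain
  by_cases hqa : a ∈ (q.edges.map c).head?
  · refine ⟨r.reverse, hr.reverse, fun z hz ↦ hsupp z ?_, fun hra ↦ ?_⟩
    · exact (Walk.mem_support_append_iff _ _).mpr (.inr (by simpa using hz))
    · rw [Walk.edges_reverse, List.map_reverse, List.head?_reverse] at hra
      refine rel_getLast?_head?_of_cycle_chain hchain (a := a) (b := a) ?_ ?_ rfl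
      · exact List.mem_head?_append_of_mem_head? hqa
      · exact List.mem_getLast?_append_of_mem_getLast? hra
  · exact ⟨q, hq, fun z hz ↦ hsupp z ((Walk.mem_support_append_iff _ _).mpr (.inl hz)), hqa⟩

end FlexiblyConnected

theorem exists_isChain_ne_of_three_le (hC : 3 ≤ ENat.card C) (n : ℕ) (a b : C) :
    ∃ l : List C, l.length = n + 1 ∧ (a :: (l ++ [b])).IsChain (· ≠ ·) := by
  induction n generalizing a with
  | zero =>
    obtain ⟨z, hza, hzb⟩ := ENat.exists_ne_ne_of_three_le hC a b
    exact ⟨[z], rfl, by simp [hza.symm, hzb]⟩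
  | succ n ih =>
    obtain ⟨z, hza, -⟩ := ENat.exists_ne_ne_of_three_le hC a a
    obtain ⟨l, hl, hzl⟩ := ih z
    exact ⟨z :: l, by simp [hl], hzl.cons_cons hza.symm⟩

theorem exists_cycle_chain_ne_append (hC : 3 ≤ ENat.card C) {l : List C}
    (hl : l.IsChain (· ≠ ·)) {n : ℕ} (hn : 2 ≤ n) :
    ∃ l' : List C, l'.length = n ∧ Cycle.Chain (· ≠ ·) (l' ++ l : Cycle C) := by
  obtain ⟨n, rfl⟩ := Nat.exists_eq_add_of_le' hn
  cases l with
  | nil =>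
    obtain ⟨a⟩ : Nonempty C :=
      (ENat.card_pos_iff_nonempty C).mp (lt_of_lt_of_le (by norm_num) hC)
    obtain ⟨l', hl', hchain⟩ := exists_isChain_ne_of_three_le hC n a a
    exact ⟨a :: l', by simp [hl'], by simpa [Cycle.chain_coe_cons] using hchain⟩
  | cons a l =>
    obtain ⟨l', hl', hchain⟩ :=
      exists_isChain_ne_of_three_le hC (n + 1) ((a :: l).getLast (List.cons_ne_nil a l)) a
    refine ⟨l', hl', (Cycle.chain_ne_nil _ (by simp)).mpr ?_⟩
    rw [List.getLast_append_of_right_ne_nil _ _ (List.cons_ne_nil a l), List.isChain_cons_split]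
    exact ⟨hchain, hl⟩

theorem exists_map_eq_of_nodup {α β : Type*} (f : α → β) {l : List α} (hl : l.Nodup) {l' : List β}
    (h : l'.length = l.length) :
    ∃ g : α → β, l.map g = l' ∧ Set.EqOn g f {x | x ∉ l} := by
  classical
  refine ⟨fun x ↦ (l'[l.idxOf x]?).getD (f x), List.ext_getElem (by simp [h]) fun i hi hi' ↦ ?_,
    fun x hx ↦ ?_⟩
  · simp [hl.idxOf_getElem, hi']
  · simp [List.idxOf_eq_length hx, ← h]

namespace FlexiblyConnected

theorem isProperPathColoring {k : ℕ} {c : Sym2 V → Fin k}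
    (hc : FlexiblyConnected G c Set.univ) : IsProperPathColoring G c := by
  intro u v _
  obtain ⟨p, hp, -, -⟩ := hc u trivial v trivial (c s(u, v))
  exact ⟨p, hp.isPath, hp.isChain⟩

theorem exists_head?_ne (hc : FlexiblyConnected G c Set.univ) (huv : u ≠ v) (p : G.Walk u v) :
    ∃ q : G.Walk u v, IsProperPath c q ∧ (p.edges.map c).head? ≠ (q.edges.map c).head? := by
  cases p with
  | nil => exact absurd rfl huv
  | cons _ _ =>
    obtain ⟨q, hq, -, hqa⟩ := hc u trivial v trivial (c s(u, _))
    exact ⟨q, hq, fun h ↦ hqa h.symm⟩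

theorem exists_getLast?_ne (hc : FlexiblyConnected G c Set.univ) (huv : u ≠ v) (p : G.Walk u v) :
    ∃ q : G.Walk u v, IsProperPath c q ∧ (p.edges.map c).getLast? ≠ (q.edges.map c).getLast? := by
  obtain ⟨q, hq, hpq⟩ := hc.exists_head?_ne huv.symm p.reverse
  refine ⟨q.reverse, hq.reverse, ?_⟩
  simpa only [Walk.edges_reverse, List.map_reverse, List.head?_reverse,
    List.getLast?_reverse] using hpq

theorem hasStrongProperty {k : ℕ} {c : Sym2 V → Fin k}
    (hc : FlexiblyConnected G c Set.univ) : HasStrongProperty G c := by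
  intro u v huv
  obtain ⟨p, hp, -, -⟩ := hc u trivial v trivial (c s(u, v))
  obtain ⟨q, hq, hpq⟩ := hc.exists_head?_ne huv p
  by_cases hlast : (p.edges.map c).getLast? = (q.edges.map c).getLast?
  · -- `p` and `q` have different first colors, so `r` differs from one of them at the first edge.
    obtain ⟨r, hr, hpr⟩ := hc.exists_getLast?_ne huv p
    by_cases hhead : (p.edges.map c).head? = (r.edges.map c).head?
    · exact ⟨q, r, hq.isPath, hq.isChain, hr.isPath, hr.isChain, fun h ↦ hpq (hhead.trans h.symm),
        hlast ▸ hpr⟩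
    · exact ⟨p, r, hp.isPath, hp.isChain, hr.isPath, hr.isChain, hhead, hpr⟩
  · exact ⟨p, q, hp.isPath, hp.isChain, hq.isPath, hq.isChain, hpq, hlast⟩

end FlexiblyConnected

theorem exists_ear (hG : G.IsEdgeConnected 2) {z : V} (hu : u ∈ S) (hz : z ∉ S) :
    ∃ s ∈ S, ∃ x ∉ S, ∃ t ∈ S, ∃ p : G.Walk x t, G.Adj s x ∧ p.IsPath ∧ s(s, x) ∉ p.edges ∧
      ∀ y ∈ p.support, y ∈ S → y = t := by
  classical
  obtain ⟨q⟩ := hG.preconnected two_ne_zero u z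
  obtain ⟨⟨⟨s, x⟩, hsx⟩, -, hs, hx⟩ := q.exists_boundary_dart S hu hz
  obtain ⟨r, hr⟩ := reachable_deleteEdges_iff_exists_walk.mp
    (isEdgeConnected_two.mp hG s(s, x) x s)
  obtain ⟨t, htr, htS, ht⟩ :=
    exists_mem_forall_support_takeUntil_imp_eq r.bypass ⟨s, r.bypass.end_mem_support, hs⟩
  refine ⟨s, hs, x, hx, t, htS, r.bypass.takeUntil t htr, hsx, r.bypass_isPath.takeUntil htr,
    fun h ↦ hr ?_, ht⟩
  exact r.edges_bypass_subset_edges (r.bypass.edges_takeUntil_subset_edges htr h)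

theorem notMem_sym2_of_mem_edges {p : G.Walk u v} (hpS : ∀ z ∈ p.support, z ∈ S → z = w)
    {e : Sym2 V} (he : e ∈ p.edges) : e ∉ S.sym2 := by
  induction e with | _ y z
  rintro ⟨hy, hz⟩
  have hyw := hpS y (p.fst_mem_support_of_mem_edges he) hy
  have hzw := hpS z (p.snd_mem_support_of_mem_edges he) hz
  exact (p.adj_of_mem_edges he).ne (hyw.trans hzw.symm)

theorem FlexiblyConnected.exists_union_ear (hC : 3 ≤ ENat.card C) (hS : FlexiblyConnected G c S)
    (hu : u ∈ S) (hx : x ∉ S) (hv : v ∈ S) (hux : G.Adj u x) {p : G.Walk x v} (hp : p.IsPath)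
    (huxp : s(u, x) ∉ p.edges) (hpS : ∀ y ∈ p.support, y ∈ S → y = v) :
    ∃ c' : Sym2 V → C, Set.EqOn c' c S.sym2 ∧
      FlexiblyConnected G c' (S ∪ {y | y ∈ p.support}) := by
  obtain ⟨q, hq, hqS, -⟩ := hS v hv u hu (c s(u, x))
  have hpq : (p.append q).IsPath := isPath_append hp hq.isPath fun y hyp hyq ↦ hpS y hyp (hqS y hyq)
  have huxq : s(u, x) ∉ q.edges := fun h ↦ hx (hqS x (q.snd_mem_support_of_mem_edges h))
  have hcycle : (Walk.cons hux (p.append q)).IsCycle := by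
    rw [Walk.cons_isCycle_iff, Walk.edges_append, List.mem_append]
    exact ⟨hpq, not_or.mpr ⟨huxp, huxq⟩⟩
  have hlength : 2 ≤ (s(u, x) :: p.edges).length := by
    have hp_pos : 0 < p.length :=
      Nat.pos_of_ne_zero fun h ↦ hx (Walk.eq_of_length_eq_zero h ▸ hv)
    rw [List.length_cons, Walk.length_edges]
    omega
  obtain ⟨l, hl, hchain⟩ := exists_cycle_chain_ne_append hC hq.isChain hlength
  obtain ⟨c', hmap, hoff⟩ := exists_map_eq_of_nodup c
    (List.nodup_cons.mpr ⟨huxp, hp.isTrail.edges_nodup⟩) hl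
  have hc' : Set.EqOn c' c S.sym2 := hoff.mono fun e he ↦ by
    rintro (_ | ⟨_, hep⟩)
    · exact hx he.2
    · exact notMem_sym2_of_mem_edges hpS hep he
  refine ⟨c', hc', ?_⟩
  have hcycle' : FlexiblyConnected G c' {y | y ∈ (Walk.cons hux (p.append q)).support} := by
    refine .of_isCycle hcycle ?_
    rwa [Walk.edges_cons, Walk.edges_append, ← List.cons_append, List.map_append, hmap,
      map_edges_eq_of_eqOn hqS hc']
  have hunion : S ∪ {y | y ∈ (Walk.cons hux (p.append q)).support} =
      S ∪ {y | y ∈ p.support} := by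
    ext y
    simp only [Set.mem_union, Set.mem_ofPred_eq, Walk.support_cons, List.mem_cons,
      Walk.mem_support_append_iff]
    grind
  exact hunion ▸ (hS.congr hc').union hcycle' ⟨u, hu, Walk.start_mem_support _⟩

theorem FlexiblyConnected.exists_ssuperset (hG : G.IsEdgeConnected 2) (hC : 3 ≤ ENat.card C)
    (hS : FlexiblyConnected G c S) (hne : S ≠ Set.univ) :
    ∃ (T : Set V) (c' : Sym2 V → C), S ⊂ T ∧ Set.EqOn c' c S.sym2 ∧ FlexiblyConnected G c' T := by
  obtain ⟨z, hz⟩ := (Set.ne_univ_iff_exists_notMem S).mp hne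
  obtain rfl | ⟨u, hu⟩ := S.eq_empty_or_nonempty
  · exact ⟨{z}, c, by simp, by simp, .singleton G c z⟩
  obtain ⟨s, hs, x, hx, t, ht, p, hsx, hp, hsxp, hpS⟩ := exists_ear hG hu hz
  obtain ⟨c', hc', hT⟩ := hS.exists_union_ear hC hs hx ht hsx hp hsxp hpS
  have hssub : S ⊂ S ∪ {y | y ∈ p.support} :=
    Set.ssubset_iff_exists.mpr ⟨Set.subset_union_left, x, .inr p.start_mem_support, hx⟩
  exact ⟨_, c', hssub, hc', hT⟩

theorem FlexiblyConnected.sUnion {𝒮 : Set (Set V)} (h𝒮 : DirectedOn (· ⊆ ·) 𝒮)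
    (h : ∀ S ∈ 𝒮, FlexiblyConnected G c S) : FlexiblyConnected G c (⋃₀ 𝒮) := by
  rintro x ⟨S, hS, hx⟩ y ⟨T, hT, hy⟩ a
  obtain ⟨U, hU, hSU, hTU⟩ := h𝒮 S hS T hT
  obtain ⟨p, hp, hpU, hpa⟩ := h U hU x (hSU hx) y (hTU hy) a
  exact ⟨p, hp, fun z hz ↦ ⟨U, hU, hpU z hz⟩, hpa⟩

/-- A set of vertices together with an edge-coloring for which it is flexibly connected; only the
colors of the edges inside `verts` are meaningful. These are ordered by extension, for an
application of Zorn's lemma. -/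
structure FlexibleColoring (G : SimpleGraph V) (C : Type*) where
  verts : Set V
  color : Sym2 V → C
  flexiblyConnected : FlexiblyConnected G color verts

namespace FlexibleColoring

/-- `A ≤ B` if `B` extends `A`: its vertex set is larger and its colors agree with those of `A` on
the edges inside `A.verts`. -/
instance : Preorder (FlexibleColoring G C) where
  le A B := A.verts ⊆ B.verts ∧ Set.EqOn B.color A.color A.verts.sym2
  le_refl A := ⟨subset_rfl, Set.eqOn_refl _ _⟩
  le_trans A B D hAB hBD := ⟨hAB.1.trans hBD.1,
    fun _ he ↦ (hBD.2 (Set.mem_sym2_iff_subset.mpr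
      ((Set.mem_sym2_iff_subset.mp he).trans hAB.1))).trans (hAB.2 he)⟩

variable {𝒞 : Set (FlexibleColoring G C)}

theorem exists_eqOn_of_isChain [Nonempty C] (h𝒞 : IsChain (· ≤ ·) 𝒞) :
    ∃ c : Sym2 V → C, ∀ A ∈ 𝒞, Set.EqOn c A.color A.verts.sym2 := by
  have hagree (e : Sym2 V) : ∃ a : C, ∀ A ∈ 𝒞, e ∈ A.verts.sym2 → a = A.color e := by
    by_cases he : ∃ A ∈ 𝒞, e ∈ A.verts.sym2
    · obtain ⟨A, hA, heA⟩ := he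
      refine ⟨A.color e, fun B hB heB ↦ ?_⟩
      obtain hAB | hBA := h𝒞.total hA hB
      · exact (hAB.2 heA).symm
      · exact hBA.2 heB
    · exact ⟨Classical.arbitrary C, fun A hA heA ↦ absurd ⟨A, hA, heA⟩ he⟩
  choose c hc using hagree
  exact ⟨c, fun A hA e he ↦ hc e A hA he⟩

theorem bddAbove_of_isChain [Nonempty C] (h𝒞 : IsChain (· ≤ ·) 𝒞) : BddAbove 𝒞 := by
  obtain ⟨c, hc⟩ := exists_eqOn_of_isChain h𝒞
  have hdirected : DirectedOn (· ⊆ ·) (verts '' 𝒞) := by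
    rintro _ ⟨A, hA, rfl⟩ _ ⟨B, hB, rfl⟩
    obtain ⟨D, hD, hAD, hBD⟩ := h𝒞.directedOn A hA B hB
    exact ⟨D.verts, Set.mem_image_of_mem verts hD, hAD.1, hBD.1⟩
  have hflexible : FlexiblyConnected G c (⋃₀ (verts '' 𝒞)) := .sUnion hdirected <| by
    rintro _ ⟨A, hA, rfl⟩
    exact A.flexiblyConnected.congr (hc A hA)
  exact ⟨⟨_, c, hflexible⟩, fun A hA ↦
    ⟨Set.subset_sUnion_of_mem (Set.mem_image_of_mem verts hA), hc A hA⟩⟩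

end FlexibleColoring

theorem exists_flexiblyConnected_univ (hG : G.IsEdgeConnected 2) (hC : 3 ≤ ENat.card C) :
    ∃ c : Sym2 V → C, FlexiblyConnected G c Set.univ := by
  have : Nonempty C := (ENat.card_pos_iff_nonempty C).mp (lt_of_lt_of_le (by norm_num) hC)
  obtain ⟨M, hM⟩ := zorn_le fun 𝒞 h𝒞 ↦
    FlexibleColoring.bddAbove_of_isChain (G := G) (C := C) (𝒞 := 𝒞) h𝒞
  refine ⟨M.color, ?_⟩
  suffices M.verts = Set.univ from this ▸ M.flexiblyConnected
  by_contra hne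
  obtain ⟨T, c', hMT, hc', hT⟩ := M.flexiblyConnected.exists_ssuperset hG hC hne
  exact hMT.2 (hM (b := ⟨T, c', hT⟩) ⟨hMT.1, hc'⟩).1

theorem reachable_deleteEdges_of_preconnected_induce {e : Sym2 V} (hv : e ∈ G.edgeSet → v ∈ e)
    (h : (G.induce ({v}ᶜ : Set V)).Preconnected) (hx : x ≠ v) (hy : y ≠ v) :
    (G.deleteEdges {e}).Reachable x y := by
  let f : G.induce ({v}ᶜ : Set V) →g G.deleteEdges {e} :=
    { toFun := Subtype.val
      map_rel' := fun {a b} hab ↦ by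
        refine deleteEdges_adj.mpr ⟨hab, ?_⟩
        rintro rfl
        obtain hva | hvb := Sym2.mem_iff.mp (hv hab)
        · exact a.2 hva.symm
        · exact b.2 hvb.symm }
  exact (h ⟨x, hx⟩ ⟨y, hy⟩).map f

theorem TwoConnected.isEdgeConnected_two (h : TwoConnected G) : G.IsEdgeConnected 2 := by
  have : Finite V := Nat.finite_of_card_ne_zero (by have := h.1; omega)
  have hcard : 3 ≤ ENat.card V := by
    rw [ENat.card_eq_coe_natCard]
    exact_mod_cast h.1
  refine SimpleGraph.isEdgeConnected_two.mpr fun e x y ↦ ?_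
  by_cases he : e ∈ G.edgeSet
  · induction e with | _ u v
    obtain ⟨w, hwu, hwv⟩ := ENat.exists_ne_ne_of_three_le hcard u v
    have reachable_w (z : V) : (G.deleteEdges {s(u, v)}).Reachable z w := by
      obtain rfl | hzu := eq_or_ne z u
      · exact reachable_deleteEdges_of_preconnected_induce (fun _ ↦ Sym2.mem_mk_right z v)
          (h.2 v).preconnected he.ne hwv
      · exact reachable_deleteEdges_of_preconnected_induce (fun _ ↦ Sym2.mem_mk_left u v)
          (h.2 u).preconnected hzu hwu
    exact (reachable_w x).trans (reachable_w y).symm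
  · obtain ⟨w, hwx, hwy⟩ := ENat.exists_ne_ne_of_three_le hcard x y
    exact reachable_deleteEdges_of_preconnected_induce (fun h ↦ absurd h he)
      (h.2 w).preconnected hwx.symm hwy.symm

end

theorem pc_twoConnected_le_three_general {V : Type*} (G : SimpleGraph V)
    (hG : G.IsEdgeConnected 2) :
    pc G ≤ 3 ∧ ∃ c : Sym2 V → Fin 3, IsProperPathColoring G c ∧ HasStrongProperty G c := by
  obtain ⟨c, hc⟩ := exists_flexiblyConnected_univ (C := Fin 3) hG (by simp)
  have hproper := hc.isProperPathColoring
  exact ⟨Nat.sInf_le ⟨c, hproper⟩, c, hproper, hc.hasStrongProperty⟩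

/-- If `G` is 2-connected, then `pc G ≤ 3` and there is a proper-path 3-coloring of `G`
with the strong property. -/
theorem pc_twoConnected_le_three {V : Type*} [Fintype V] (G : SimpleGraph V)
    (h2 : TwoConnected G) :
    pc G ≤ 3 ∧ ∃ c : Sym2 V → Fin 3, IsProperPathColoring G c ∧ HasStrongProperty G c :=
  pc_twoConnected_le_three_general G h2.isEdgeConnected_two
end

section
/- Let G be a simple graph on n = 5 vertices such that both G and its complement Ḡ are connected. Then pc(G) + pc(Ḡ) = 5 if G ≅ T(2,3) or Ḡ ≅ T(2,3), and pc(G) + pc(Ḡ) = 4 otherwise. -/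
open SimpleGraph

/-- The double star `T(2, n-2)` on `n` vertices: the centers `0` (of degree `n-2`) and `1`
(of degree `2`) are adjacent, vertex `2` is the leaf attached to center `1`, and vertices
`3, …, n-1` are the leaves attached to center `0`. -/
def doubleStarT2 (n : ℕ) : SimpleGraph (Fin n) :=
  SimpleGraph.fromRel (fun x y =>
    (x.val = 0 ∧ y.val = 1) ∨ (x.val = 1 ∧ y.val = 2) ∨ (x.val = 0 ∧ 3 ≤ y.val))

/-!
Coloring the edges of a Hamiltonian path alternately shows that a noncomplete traceable graph has
proper connection number `2`. In a tree the path between two vertices is unique, so a proper-path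
coloring is the same as a proper edge-coloring; hence `T(2,3)`, with its vertex of degree `3`, has
proper connection number `3`.

When `G` and `Gᶜ` are connected, `G` has no universal vertex, which forces a path `a b c d` in `G`.
On five vertices the remaining vertex `x` either extends this path at an end or, up to reversal, is
adjacent to `b`. In the latter case either `G` is traceable or it has no further edges and is
`T(2,3)`. The two graphs cannot both be `T(2,3)`, which has `4` of the `10` possible edges.
-/

section ProperPathColoring

variable {V W : Type*} {G : SimpleGraph V} {H : SimpleGraph W} {k : ℕ} {c : Sym2 V → Fin k}

theorem IsProperPathColoring.comp_iso {c : Sym2 W → Fin k} (hc : IsProperPathColoring H c)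
    (e : G ≃g H) : IsProperPathColoring G (c ∘ Sym2.map e) := by
  intro u v huv
  obtain ⟨p, hp, hpc⟩ := hc (e u) (e v) (e.injective.ne huv)
  let q : G.Walk u v := (p.map e.symm.toHom).copy (e.symm_apply_apply u) (e.symm_apply_apply v)
  have hq : q.edges = p.edges.map (Sym2.map e.symm) := by
    simp only [q, Walk.edges_copy, Walk.edges_map]
    rfl
  have hcomp : (c ∘ Sym2.map e) ∘ Sym2.map e.symm = c := by
    funext z
    simp [Sym2.map_map, Function.comp_def]
  refine ⟨q, (Walk.isPath_copy ..).2 (hp.map e.symm.injective), ?_⟩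
  rwa [hq, List.map_map, hcomp]

theorem pc_congr (e : G ≃g H) : pc G = pc H :=
  congrArg sInf <| Set.ext fun _ =>
    ⟨fun ⟨_, hc⟩ => ⟨_, hc.comp_iso e.symm⟩, fun ⟨_, hc⟩ => ⟨_, hc.comp_iso e⟩⟩

theorem IsProperPathColoring.two_le (hc : IsProperPathColoring G c) (hG : G ≠ ⊤) : 2 ≤ k := by
  obtain ⟨u, v, huv, hadj⟩ := ne_top_iff_exists_not_adj.1 hG
  obtain ⟨p, -, hp⟩ := hc u v huv
  match p with
  | .nil => exact absurd rfl huv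
  | .cons h .nil => exact absurd h hadj
  | .cons _ (.cons _ _) =>
    exact Fin.nontrivial_iff_two_le.1 ⟨_, _, (List.isChain_cons_cons.1 hp).1⟩

end ProperPathColoring

section ProperEdgeColoring

variable {V : Type*} {G : SimpleGraph V} {k : ℕ} {c : Sym2 V → Fin k}

/-- An edge-coloring is proper if edges sharing an endpoint have different colors. Only the values
of `c` on edges of `G` matter. -/
def IsProperEdgeColoring (G : SimpleGraph V) (c : Sym2 V → Fin k) : Prop :=
  ∀ ⦃v a b : V⦄, G.Adj v a → G.Adj v b → a ≠ b → c s(v, a) ≠ c s(v, b)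

theorem IsProperEdgeColoring.isChain_of_isPath (hc : IsProperEdgeColoring G c) {u v : V}
    {p : G.Walk u v} (hp : p.IsPath) : (p.edges.map c).IsChain (· ≠ ·) := by
  induction p with
  | nil => exact .nil
  | @cons a b _ hab q ih =>
    have ⟨hq, ha⟩ := (Walk.cons_isPath_iff hab q).1 hp
    cases q with
    | nil => exact .singleton _
    | @cons _ d _ hbd r =>
      have had : a ≠ d := by rintro rfl; simp at ha
      have hcol : c s(a, b) ≠ c s(b, d) := Sym2.eq_swap (a := b) ▸ hc hab.symm hbd had
      exact List.isChain_cons_cons.2 ⟨hcol, ih hq⟩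

theorem IsProperEdgeColoring.isProperPathColoring (hc : IsProperEdgeColoring G c)
    (hG : G.Preconnected) : IsProperPathColoring G c := fun u v _ =>
  let ⟨p, hp⟩ := (hG u v).exists_isPath
  ⟨p, hp, hc.isChain_of_isPath hp⟩

theorem IsProperPathColoring.isProperEdgeColoring (hc : IsProperPathColoring G c)
    (hG : G.IsAcyclic) : IsProperEdgeColoring G c := by
  intro v a b hva hvb hab
  obtain ⟨p, hp, hpc⟩ := hc a b hab
  have hq : (Walk.cons hva.symm (.cons hvb .nil)).IsPath := by simp [hab, hva.ne', hvb.ne]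
  obtain rfl : p = _ := congrArg Subtype.val
    ((hG.subsingleton_path a b).elim ⟨p, hp⟩ ⟨_, hq⟩)
  rw [Sym2.eq_swap]
  exact (List.isChain_cons_cons.1 hpc).1

theorem IsProperEdgeColoring.degree_le (hc : IsProperEdgeColoring G c) (v : V)
    [Fintype (G.neighborSet v)] : G.degree v ≤ k := by
  have hinj : Set.InjOn (fun w => c s(v, w)) (G.neighborFinset v) := by
    intro a ha b hb hab
    by_contra hne
    exact hc ((G.mem_neighborFinset v a).1 ha) ((G.mem_neighborFinset v b).1 hb) hne hab
  simpa using Finset.card_le_card_of_injOn _ (fun _ _ => Finset.mem_univ _) hinj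

end ProperEdgeColoring

section Traceable

variable {V : Type*} {G : SimpleGraph V}

/-- A graph is traceable if it has a Hamiltonian path. Unlike `SimpleGraph.Walk.IsHamiltonian`,
this form needs no decidable equality on the vertices. -/
def IsTraceable (G : SimpleGraph V) : Prop :=
  ∃ (u v : V) (p : G.Walk u v), p.IsPath ∧ ∀ w, w ∈ p.support

theorem mem_of_nodup_of_length_eq_card {α : Type*} [Fintype α] {l : List α} (hl : l.Nodup)
    (hlen : l.length = Fintype.card α) (x : α) : x ∈ l := by
  classical
  have huniv : l.toFinset = Finset.univ :=
    Finset.eq_univ_of_card _ ((List.toFinset_card_of_nodup hl).trans hlen)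
  exact List.mem_toFinset.1 (huniv ▸ Finset.mem_univ x)

theorem isTraceable_of_isChain [Fintype V] {l : List V} (hl : l.IsChain G.Adj) (hnd : l.Nodup)
    (hne : l ≠ []) (hlen : l.length = Fintype.card V) : IsTraceable G := by
  refine ⟨_, _, Walk.ofSupport l hne hl, Walk.IsPath.mk' ?_, fun w => ?_⟩
  · rwa [Walk.support_ofSupport]
  · rw [Walk.support_ofSupport]
    exact mem_of_nodup_of_length_eq_card hnd hlen w

theorem exists_isSubwalk_or_reverse_isSubwalk {u v a b : V} (p : G.Walk u v)
    (ha : a ∈ p.support) (hb : b ∈ p.support) :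
    ∃ q : G.Walk a b, q.IsSubwalk p ∨ q.reverse.IsSubwalk p := by
  classical
  have hb' : b ∈ (p.takeUntil a ha).support ∨ b ∈ (p.dropUntil a ha).support := by
    rwa [← Walk.mem_support_append_iff, Walk.take_spec]
  rcases hb' with hb | hb
  · refine ⟨((p.takeUntil a ha).dropUntil b hb).reverse, .inr ?_⟩
    rw [Walk.reverse_reverse]
    exact (Walk.isSubwalk_dropUntil _ hb).trans (p.isSubwalk_takeUntil ha)
  · exact ⟨(p.dropUntil a ha).takeUntil b hb, .inl <|
      (Walk.isSubwalk_takeUntil _ hb).trans (p.isSubwalk_dropUntil ha)⟩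

theorem exists_fin_two_isChain_map_ne {α : Type*} {l : List α} (hl : l.Nodup) :
    ∃ c : α → Fin 2, (l.map c).IsChain (· ≠ ·) := by
  classical
  refine ⟨fun x => Fin.ofNat 2 (l.idxOf x), List.isChain_iff_getElem.2 fun i hi => ?_⟩
  simp only [List.getElem_map, hl.idxOf_getElem, ne_eq, Fin.ext_iff, Fin.val_ofNat]
  omega

theorem IsTraceable.exists_isProperPathColoring (hG : IsTraceable G) :
    ∃ c : Sym2 V → Fin 2, IsProperPathColoring G c := by
  obtain ⟨u, v, p, hp, hmem⟩ := hG
  obtain ⟨c, hc⟩ := exists_fin_two_isChain_map_ne hp.isTrail.edges_nodup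
  have hsub {a b : V} {q : G.Walk a b} (hq : q.IsSubwalk p) :
      q.IsPath ∧ (q.edges.map c).IsChain (· ≠ ·) :=
    ⟨Walk.isPath_of_isSubwalk hq hp, hc.infix (hq.edges_isInfix.map c)⟩
  refine ⟨c, fun a b _ => ?_⟩
  obtain ⟨q, hq | hq⟩ := exists_isSubwalk_or_reverse_isSubwalk p (hmem a) (hmem b)
  · exact ⟨q, hsub hq⟩
  · obtain ⟨hpath, hchain⟩ := hsub hq
    refine ⟨q, (Walk.isPath_reverse_iff q).1 hpath, ?_⟩
    rw [Walk.edges_reverse, List.map_reverse, List.isChain_reverse] at hchain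
    exact hchain.imp fun _ _ => Ne.symm

theorem IsTraceable.pc_eq_two (hG : IsTraceable G) (hne : G ≠ ⊤) : pc G = 2 :=
  IsLeast.csInf_eq ⟨hG.exists_isProperPathColoring, fun _ ⟨_, hc⟩ => hc.two_le hne⟩

end Traceable

section DoubleStar

instance doubleStarT2.instDecidableRelAdj (n : ℕ) : DecidableRel (doubleStarT2 n).Adj :=
  inferInstanceAs (DecidableRel (SimpleGraph.fromRel _).Adj)

theorem doubleStarT2_five_isTree : (doubleStarT2 5).IsTree := by
  refine isTree_iff_connected_and_card.2 ⟨by decide +kernel, ?_⟩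
  rw [Nat.card_eq_fintype_card, Nat.card_eq_fintype_card]
  decide

theorem exists_isProperEdgeColoring_doubleStarT2_five :
    ∃ c : Sym2 (Fin 5) → Fin 3, IsProperEdgeColoring (doubleStarT2 5) c :=
  ⟨fun e => if e = s(0, 1) then 0 else if e = s(0, 4) then 2 else 1, by
    unfold IsProperEdgeColoring; decide⟩

theorem pc_doubleStarT2_five : pc (doubleStarT2 5) = 3 := by
  obtain ⟨c, hc⟩ := exists_isProperEdgeColoring_doubleStarT2_five
  have hdeg : (doubleStarT2 5).degree 0 = 3 := by decide
  refine IsLeast.csInf_eq ⟨⟨c, hc.isProperPathColoring ?_⟩, fun k ⟨c', hc'⟩ => ?_⟩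
  · exact doubleStarT2_five_isTree.connected.preconnected
  · exact hdeg ▸ (hc'.isProperEdgeColoring doubleStarT2_five_isTree.isAcyclic).degree_le 0

theorem not_nonempty_compl_iso_doubleStarT2_five {V : Type*} {G : SimpleGraph V}
    (e : G ≃g doubleStarT2 5) : ¬Nonempty (Gᶜ ≃g doubleStarT2 5) := by
  rintro ⟨f⟩
  let ec : Gᶜ ≃g (doubleStarT2 5)ᶜ :=
    ⟨e.toEquiv, by simp [e.map_adj_iff, e.injective.eq_iff]⟩
  have hcard := Iso.card_edgeFinset_eq (f.comp ec.symm)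
  revert hcard
  decide

end DoubleStar

section FiveVertices

variable {V : Type*} {G : SimpleGraph V}

theorem exists_adj_of_nonempty_of_ne_univ (hG : G.Preconnected) {s : Set V} (hs : s.Nonempty)
    (hs' : s ≠ Set.univ) : ∃ v ∈ s, ∃ w ∉ s, G.Adj v w := by
  obtain ⟨x, hx⟩ := hs
  obtain ⟨y, hy⟩ := (Set.ne_univ_iff_exists_notMem s).1 hs'
  obtain ⟨p⟩ := hG x y
  obtain ⟨d, -, hd, hd'⟩ := p.exists_boundary_dart s hx hy
  exact ⟨d.fst, hd, d.snd, hd', d.adj⟩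

theorem exists_adj_adj_not_adj (hG : G.Preconnected) {u : V} (hu : ¬G.IsUniversal u) :
    ∃ v w, G.Adj u v ∧ G.Adj v w ∧ u ≠ w ∧ ¬G.Adj u w := by
  obtain ⟨z, huz, hnadj⟩ : ∃ z, u ≠ z ∧ ¬G.Adj u z := by simpa [IsUniversal] using hu
  obtain ⟨v, hv, w, hw, hvw⟩ := exists_adj_of_nonempty_of_ne_univ hG (s := {x | x = u ∨ G.Adj u x})
    ⟨u, .inl rfl⟩ ((Set.ne_univ_iff_exists_notMem _).2 ⟨z, by simp [huz.symm, hnadj]⟩)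
  simp only [Set.mem_ofPred_eq, not_or] at hv hw
  rcases hv with rfl | hv
  · exact absurd hvw hw.2
  · exact ⟨v, w, hv, hvw, Ne.symm hw.1, hw.2⟩

theorem exists_isChain_four (hG : G.Connected) (hu : ∀ v, ¬G.IsUniversal v) :
    ∃ a b c d, [a, b, c, d].IsChain G.Adj ∧ [a, b, c, d].Nodup := by
  obtain ⟨v⟩ := hG.nonempty
  obtain ⟨u, w, hvu, huw, hvw, -⟩ := exists_adj_adj_not_adj hG.preconnected (hu v)
  obtain ⟨y, z, huy, hyz, huz, hnuz⟩ := exists_adj_adj_not_adj hG.preconnected (hu u)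
  obtain rfl | hyv := eq_or_ne y v
  · have hzw : z ≠ w := by rintro rfl; exact hnuz huw
    refine ⟨z, y, u, w, by simp [hyz.symm, hvu, huw], ?_⟩
    simp [hyz.ne', huz.symm, hzw, hvu.ne, hvw, huw.ne]
  · have hvz : v ≠ z := by rintro rfl; exact hnuz hvu.symm
    refine ⟨v, u, y, z, by simp [hvu, huy, hyz], ?_⟩
    simp [hvu.ne, hyv.symm, hvz, huy.ne, huz, hyz.ne]

theorem map_adj_iff_of_lt {W : Type*} [LinearOrder W] {H : SimpleGraph W} {f : W → V}
    (h : ∀ i j, i < j → (G.Adj (f i) (f j) ↔ H.Adj i j)) (i j : W) :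
    G.Adj (f i) (f j) ↔ H.Adj i j := by
  rcases lt_trichotomy i j with hij | rfl | hij
  · exact h i j hij
  · simp
  · rw [G.adj_comm, H.adj_comm, h j i hij]

variable [Fintype V]

/-- Any edge besides `a b`, `b c`, `c d`, `b x` would produce a Hamiltonian path or make `b`
universal. -/
theorem nonempty_iso_doubleStarT2_five_of_isChain (hn : Fintype.card V = 5) {a b c d x : V}
    (hchain : [a, b, c, d].IsChain G.Adj) (hnd : [a, b, c, d, x].Nodup) (hbx : G.Adj b x)
    (hb : ¬G.IsUniversal b) (hG : ¬IsTraceable G) : Nonempty (G ≃g doubleStarT2 5) := by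
  obtain ⟨hab, hbc, hcd⟩ : G.Adj a b ∧ G.Adj b c ∧ G.Adj c d := by simpa using hchain
  have hnochain (v₀ v₁ v₂ v₃ v₄ : V) (hnodup : [v₀, v₁, v₂, v₃, v₄].Nodup) :
      ¬[v₀, v₁, v₂, v₃, v₄].IsChain G.Adj := fun h =>
    hG (isTraceable_of_isChain h hnodup (List.cons_ne_nil _ _) hn.symm)
  have hax : ¬G.Adj a x := fun h => hnochain x a b c d (by grind) (by
    simp [h.symm, hab, hbc, hcd])
  have hdx : ¬G.Adj d x := fun h => hnochain a b c d x hnd (by simp [hab, hbc, hcd, h])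
  have hcx : ¬G.Adj c x := fun h => hnochain a b x c d (by grind) (by
    simp [h.symm, hab, hbx, hcd])
  have hda : ¬G.Adj d a := fun h => hnochain x b a d c (by grind) (by
    simp [h.symm, hbx.symm, hab.symm, hcd.symm])
  have hca : ¬G.Adj c a := fun h => hnochain x b a c d (by grind) (by
    simp [h.symm, hbx.symm, hab.symm, hcd])
  have hbd : ¬G.Adj b d := fun h => hb fun w hbw => by
    have hw : w ∈ [a, b, c, d, x] := mem_of_nodup_of_length_eq_card hnd hn.symm w
    simp only [List.mem_cons, List.not_mem_nil, or_false] at hw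
    rcases hw with rfl | rfl | rfl | rfl | rfl
    exacts [hab.symm, absurd rfl hbw, hbc, h, hbx]
  have hnd' : [b, c, d, a, x].Nodup := by grind
  have hinj : Function.Injective ![b, c, d, a, x] :=
    List.nodup_ofFn.1 (by simpa [List.ofFn_succ] using hnd')
  have hbij : Function.Bijective ![b, c, d, a, x] :=
    (Fintype.bijective_iff_injective_and_card _).2 ⟨hinj, by simp [hn]⟩
  have hadj : ∀ i j : Fin 5, i < j → (G.Adj (![b, c, d, a, x] i) (![b, c, d, a, x] j) ↔
      (doubleStarT2 5).Adj i j) := by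
    simp [Fin.forall_fin_succ, doubleStarT2, hab.symm, hbc, hcd, hbx, hax, hdx, hcx, hda, hca, hbd]
  exact ⟨(⟨Equiv.ofBijective _ hbij, map_adj_iff_of_lt hadj _ _⟩ : doubleStarT2 5 ≃g G).symm⟩

theorem isTraceable_or_nonempty_iso_doubleStarT2_five (hn : Fintype.card V = 5)
    (hG : G.Connected) (hu : ∀ v, ¬G.IsUniversal v) :
    IsTraceable G ∨ Nonempty (G ≃g doubleStarT2 5) := by
  refine or_iff_not_imp_left.2 fun hnt => ?_
  obtain ⟨a, b, c, d, hchain, hnd⟩ := exists_isChain_four hG hu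
  have hproper : {v | v ∈ [a, b, c, d]} ≠ Set.univ := fun h => by
    have hsurj : Function.Surjective [a, b, c, d].get := fun v =>
      List.mem_iff_get.1 (Set.eq_univ_iff_forall.1 h v)
    have hle : Fintype.card V ≤ 4 := by simpa using Fintype.card_le_of_surjective _ hsurj
    omega
  obtain ⟨y, hy, x, hx, hyx⟩ :=
    exists_adj_of_nonempty_of_ne_univ hG.preconnected ⟨a, List.mem_cons_self⟩ hproper
  have hchain' : [d, c, b, a].IsChain G.Adj :=
    List.isChain_reverse.2 (hchain.imp fun _ _ h => h.symm)
  have hnd₁ : [a, b, c, d, x].Nodup := by grind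
  have hnd₂ : [d, c, b, a, x].Nodup := by grind
  simp only [Set.mem_ofPred_eq, List.mem_cons, List.not_mem_nil, or_false] at hy
  rcases hy with rfl | rfl | rfl | rfl
  · exact absurd (isTraceable_of_isChain (hchain.cons_cons hyx.symm) (by grind)
      (List.cons_ne_nil _ _) hn.symm) hnt
  · exact nonempty_iso_doubleStarT2_five_of_isChain hn hchain hnd₁ hyx (hu y) hnt
  · exact nonempty_iso_doubleStarT2_five_of_isChain hn hchain' hnd₂ hyx (hu y) hnt
  · exact absurd (isTraceable_of_isChain (hchain'.cons_cons hyx.symm) (by grind)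
      (List.cons_ne_nil _ _) hn.symm) hnt

theorem pc_eq_two_of_card_five (hn : Fintype.card V = 5) (hG : G.Connected)
    (hu : ∀ v, ¬G.IsUniversal v) (hT : ¬Nonempty (G ≃g doubleStarT2 5)) : pc G = 2 := by
  obtain ⟨v⟩ := hG.nonempty
  exact ((isTraceable_or_nonempty_iso_doubleStarT2_five hn hG hu).resolve_right hT).pc_eq_two
    fun h => hu v (eq_top_iff_forall_isUniversal.1 h v)

end FiveVertices

/-- For a graph `G` on 5 vertices with `G` and `Gᶜ` both connected:
`pc G + pc Gᶜ = 5` if `G ≅ T(2,3)` or `Gᶜ ≅ T(2,3)`, and `pc G + pc Gᶜ = 4` otherwise. -/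
theorem nordhaus_gaddum_card_five {V : Type*} [Fintype V] (G : SimpleGraph V)
    (hn : Fintype.card V = 5) (hG : G.Connected) (hGc : Gᶜ.Connected) :
    ((Nonempty (G ≃g doubleStarT2 5) ∨ Nonempty (Gᶜ ≃g doubleStarT2 5)) →
      pc G + pc Gᶜ = 5) ∧
    (¬ (Nonempty (G ≃g doubleStarT2 5) ∨ Nonempty (Gᶜ ≃g doubleStarT2 5)) →
      pc G + pc Gᶜ = 4) := by
  have : Nontrivial V := Fintype.one_lt_card_iff_nontrivial.1 (by omega)
  have hu (v : V) : ¬G.IsUniversal v :=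
    isIsolated_compl_iff_isUniversal.not.1 (hGc.preconnected.not_isIsolated v)
  have hu' (v : V) : ¬Gᶜ.IsUniversal v :=
    isUniversal_compl_iff_isIsolated.not.2 (hG.preconnected.not_isIsolated v)
  have htwo : ¬Nonempty (G ≃g doubleStarT2 5) → pc G = 2 := pc_eq_two_of_card_five hn hG hu
  have htwo' : ¬Nonempty (Gᶜ ≃g doubleStarT2 5) → pc Gᶜ = 2 := pc_eq_two_of_card_five hn hGc hu'
  refine ⟨?_, fun h => ?_⟩
  · rintro (⟨⟨e⟩⟩ | ⟨⟨e⟩⟩)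
    · rw [pc_congr e, pc_doubleStarT2_five, htwo' (not_nonempty_compl_iso_doubleStarT2_five e)]
    · have hnot := not_nonempty_compl_iso_doubleStarT2_five e
      rw [compl_compl] at hnot
      rw [pc_congr e, pc_doubleStarT2_five, htwo hnot]
  · obtain ⟨hT, hT'⟩ := not_or.1 h
    rw [htwo hT, htwo' hT']
end
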